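/- Fix p > 1 and q > 3/2. For every ε > 0 there exists C = C(ε, p, q) such that every nonnegative Schwartz-class g : ℝ³ → ℝ satisfies the ε-Poincaré inequality ∫_{ℝ³} g^{p+1} dv ≤ ε ∫_{ℝ³} |∇( g^{p/2} ⟨v⟩^{−3/2} )|² dv + C ( ∫_{ℝ³} (⟨v⟩³ g)^q dv )^{2/(2q−3) · (1/q) · q} ∫_{ℝ³} g^p ⟨v⟩^{−3} dv, that is, ∫ g^{p+1} ≤ ε ‖∇(g^{p/2}⟨·⟩^{−3/2})‖_{L²}² + C ‖⟨·⟩³ g‖_{L^q}^{2q/(2q−3)} ∫ g^p ⟨v⟩^{−3} dv. -/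

import Mathlib

open MeasureTheory Real Filter Set

noncomputable section

/-- Velocity space ℝ³. -/
abbrev V3 : Type := EuclideanSpace ℝ (Fin 3)

/-- Japanese bracket ⟨v⟩ = (1+|v|²)^{1/2}. -/
def jap (v : V3) : ℝ := Real.sqrt (1 + ‖v‖ ^ 2)

/-- Partial derivative in the i-th coordinate direction. -/
def pd (i : Fin 3) (g : V3 → ℝ) (v : V3) : ℝ :=
  fderiv ℝ g v (EuclideanSpace.single i 1)

/-- Projection matrix Π(z) = Id − z⊗z/|z|². -/
def projPi (z : V3) (i j : Fin 3) : ℝ :=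
  (if i = j then (1 : ℝ) else 0) - z i * z j / ‖z‖ ^ 2

/-- Landau–Coulomb diffusion matrix A[f]. -/
def coeffA (f : V3 → ℝ) (v : V3) (i j : Fin 3) : ℝ :=
  (8 * π)⁻¹ * ∫ w : V3, projPi (v - w) i j / ‖v - w‖ * f w

/-- Newtonian potential a[f] = (−Δ)⁻¹ f. -/
def coeffa (f : V3 → ℝ) (v : V3) : ℝ :=
  (4 * π)⁻¹ * ∫ w : V3, f w / ‖v - w‖

/-- The homogeneous Landau–Coulomb equation
    ∂_t f = ∇·(A[f]∇f − f ∇a[f]), pointwise at (t,v). -/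
def LandauEqAt (f : ℝ → V3 → ℝ) (t : ℝ) (v : V3) : Prop :=
  deriv (fun s => f s v) t =
    ∑ i : Fin 3, pd i
      (fun w => (∑ j : Fin 3, coeffA (f t) w i j * pd j (f t) w)
        - f t w * pd i (coeffa (f t)) w) v

/-- Normalization: unit mass, zero momentum, energy 3. -/
def IsNormalized (f : V3 → ℝ) : Prop :=
  (∫ v : V3, f v) = 1 ∧ (∀ i : Fin 3, (∫ v : V3, f v * v i) = 0) ∧
    (∫ v : V3, f v * ‖v‖ ^ 2) = 3

/-- Schwartz class function. -/
def IsSchwartz (g : V3 → ℝ) : Prop := ∃ h : SchwartzMap V3 ℝ, ⇑h = g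

/-- Distributional (weak) solution of the Landau–Coulomb equation on (0,T). -/
def IsWeakLandauSolution (T : ℝ) (g : ℝ → V3 → ℝ) : Prop :=
  ∀ φ : ℝ × V3 → ℝ, ContDiff ℝ (⊤ : ℕ∞) φ → HasCompactSupport φ →
    (Function.support φ ⊆ Set.Ioo 0 T ×ˢ (Set.univ : Set V3)) →
    (∫ t in Set.Ioo 0 T, ∫ v : V3, φ (t, v) * deriv (fun s => g s v) t) =
      - ∫ t in Set.Ioo 0 T, ∫ v : V3, ∑ i : Fin 3,
          (fderiv ℝ φ (t, v) (0, EuclideanSpace.single i 1)) *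
          ((∑ j : Fin 3, coeffA (g t) v i j * pd j (g t) v)
            - g t v * pd i (coeffa (g t)) v)

/-- Membership in L^r(0,T;L^p(ℝ³)). -/
def MemLrLp (r p T : ℝ) (g : ℝ → V3 → ℝ) : Prop :=
  (∀ᵐ t ∂(volume.restrict (Set.Ioo 0 T)), Integrable (fun v : V3 => |g t v| ^ p)) ∧
  IntegrableOn (fun t => (∫ v : V3, |g t v| ^ p) ^ (r / p)) (Set.Ioo 0 T)

/-- g ∈ W^{1,∞}(Ω) for every Ω compactly contained in (0,T] × ℝ³,
    i.e. g is Lipschitz on every compact subset of (0,T] × ℝ³. -/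
def LocLipschitz (T : ℝ) (g : ℝ → V3 → ℝ) : Prop :=
  ∀ K : Set (ℝ × V3), IsCompact K → K ⊆ Set.Ioc 0 T ×ˢ (Set.univ : Set V3) →
    ∃ L : NNReal, LipschitzOnWith L (fun q : ℝ × V3 => g q.1 q.2) K

open Module
open scoped ENNReal NNReal Topology SchwartzMap

/-!
With `u = g ^ (p / 2) ⟨v⟩ ^ (-m / 2)` and `h = ⟨v⟩ ^ m g` one has `g ^ (p + 1) = h u ^ 2` and
`g ^ p ⟨v⟩ ^ (-m) = u ^ 2`. In dimension `n > 2`, Hölder's inequality interpolates `∫ h u ^ 2`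
between `‖h‖_q`, `‖u‖_2` and the critical norm `‖u‖_{2n/(n-2)}`; the Sobolev inequality replaces
the last one by `‖∇u‖_2`, and Young's inequality separates the factors.

The exponent `p / 2` may be less than `1`, so that the regularity of `u` at the zeros of `g` is not
automatic. Since `u` is the `(p / 2)`-th power of the nonnegative Schwartz function
`⟨v⟩ ^ (-m / p) g`, it follows from Glaeser's inequality `|∇f| ≤ C √f` for nonnegative `f` with
Lipschitz gradient, as soon as `p / 2 > 1 / 2`.
-/

section Cutoff

variable {E F : Type*} [NormedAddCommGroup E] [NormedSpace ℝ E]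
  [NormedAddCommGroup F] [NormedSpace ℝ F]

lemma norm_fderiv_comp_smul_smul_le {χ : E → ℝ} {u : E → F} {M : ℝ} (hχ : Differentiable ℝ χ)
    (hu : Differentiable ℝ u) (hχ_le : ∀ x, ‖χ x‖ ≤ 1) (hχM : ∀ x, ‖fderiv ℝ χ x‖ ≤ M)
    (c : ℝ) (x : E) :
    ‖fderiv ℝ (fun y ↦ χ (c • y) • u y) x‖ ≤ ‖fderiv ℝ u x‖ + |c| * M * ‖u x‖ := by
  have hχc : DifferentiableAt ℝ (fun y ↦ χ (c • y)) x :=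
    (hχ _).comp x (differentiableAt_id.const_smul c)
  rw [fderiv_fun_smul hχc (hu x), fderiv_comp_smul]
  calc _ ≤ ‖χ (c • x) • fderiv ℝ u x‖ + ‖(c • fderiv ℝ χ (c • x)).smulRight (u x)‖ :=
        norm_add_le _ _
    _ = ‖χ (c • x)‖ * ‖fderiv ℝ u x‖ + |c| * ‖fderiv ℝ χ (c • x)‖ * ‖u x‖ := by
        rw [norm_smul, ContinuousLinearMap.norm_smulRight_apply, norm_smul, Real.norm_eq_abs c]
    _ ≤ 1 * ‖fderiv ℝ u x‖ + |c| * M * ‖u x‖ := by gcongr; exacts [hχ_le _, hχM _]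
    _ = _ := by rw [one_mul]

lemma eLpNorm_fderiv_comp_smul_smul_le [MeasurableSpace E] [OpensMeasurableSpace E]
    [SecondCountableTopology E]
    {χ : E → ℝ} {u : E → F} {M : ℝ} (hχ : Differentiable ℝ χ) (hu : ContDiff ℝ 1 u)
    (hχ_le : ∀ x, ‖χ x‖ ≤ 1) (hχM : ∀ x, ‖fderiv ℝ χ x‖ ≤ M)
    (c : ℝ) {p : ℝ≥0∞} (hp : 1 ≤ p) (μ : Measure E) :
    eLpNorm (fderiv ℝ fun y ↦ χ (c • y) • u y) p μ ≤
      eLpNorm (fderiv ℝ u) p μ + ENNReal.ofReal (|c| * M) * eLpNorm u p μ := by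
  have hM : 0 ≤ |c| * M := mul_nonneg (abs_nonneg c) ((norm_nonneg _).trans (hχM 0))
  calc _ ≤ eLpNorm ((fun x ↦ ‖fderiv ℝ u x‖) + (|c| * M) • fun x ↦ ‖u x‖) p μ :=
        eLpNorm_mono_real
          (norm_fderiv_comp_smul_smul_le hχ (hu.differentiable one_ne_zero) hχ_le hχM c)
    _ ≤ eLpNorm (fun x ↦ ‖fderiv ℝ u x‖) p μ + eLpNorm ((|c| * M) • fun x ↦ ‖u x‖) p μ :=
        eLpNorm_add_le (hu.continuous_fderiv one_ne_zero).norm.aestronglyMeasurable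
          (hu.continuous.norm.aestronglyMeasurable.const_smul _) hp
    _ = _ := by
        rw [eLpNorm_const_smul, eLpNorm_norm, eLpNorm_norm, Real.enorm_of_nonneg hM]

end Cutoff

lemma exists_contDiff_hasCompactSupport_eq_one (E : Type*) [NormedAddCommGroup E]
    [NormedSpace ℝ E] [FiniteDimensional ℝ E] :
    ∃ (χ : E → ℝ) (M : ℝ), ContDiff ℝ 1 χ ∧ HasCompactSupport χ ∧ χ 0 = 1 ∧
      (∀ x, ‖χ x‖ ≤ 1) ∧ ∀ x, ‖fderiv ℝ χ x‖ ≤ M := by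
  let χ : ContDiffBump (0 : E) := ⟨1, 2, one_pos, one_lt_two⟩
  have hχ : ContDiff ℝ 1 χ := χ.contDiff
  obtain ⟨M, hM⟩ := (χ.hasCompactSupport.fderiv ℝ).exists_bound_of_continuous
    (hχ.continuous_fderiv one_ne_zero)
  refine ⟨χ, M, hχ, χ.hasCompactSupport, χ.one_of_mem_closedBall (by simp [χ]), fun x ↦ ?_, hM⟩
  rw [Real.norm_of_nonneg χ.nonneg]
  exact χ.le_one

section Sobolev

variable {E F : Type*} [NormedAddCommGroup E] [NormedSpace ℝ E] [FiniteDimensional ℝ E]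
  [MeasurableSpace E] [BorelSpace E] (μ : Measure E) [μ.IsAddHaarMeasure]
  [NormedAddCommGroup F] [InnerProductSpace ℝ F]

theorem eLpNorm_le_eLpNorm_fderiv_of_memLp {u : E → F} {p p' : ℝ≥0} (hu : ContDiff ℝ 1 u)
    (hup : MemLp u p μ) (hp : 1 ≤ p) (hn : 0 < finrank ℝ E)
    (hp' : (p' : ℝ)⁻¹ = p⁻¹ - (finrank ℝ E : ℝ)⁻¹) :
    eLpNorm u p' μ ≤ eLpNormLESNormFDerivOfEqInnerConst μ p * eLpNorm (fderiv ℝ u) p μ := by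
  set K := eLpNormLESNormFDerivOfEqInnerConst μ p
  obtain ⟨χ, M, hχ, hχ_supp, hχ_zero, hχ_le, hM⟩ := exists_contDiff_hasCompactSupport_eq_one E
  let c : ℕ → ℝ := fun k ↦ 1 / ((k : ℝ) + 1)
  have hc : Tendsto c atTop (𝓝 0) := tendsto_one_div_add_atTop_nhds_zero_nat
  let U : ℕ → E → F := fun k x ↦ χ (c k • x) • u x
  have hU (k : ℕ) : ContDiff ℝ 1 (U k) := (hχ.comp (contDiff_const_smul (c k))).smul hu
  have hU_supp (k : ℕ) : HasCompactSupport (U k) :=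
    (hχ_supp.comp_homeomorph (Homeomorph.smulOfNeZero (c k) (by positivity))).smul_right
  have hU_lim (x : E) : Tendsto (fun k ↦ U k x) atTop (𝓝 (u x)) := by
    have hcx : Tendsto (fun k ↦ c k • x) atTop (𝓝 0) := by simpa using hc.smul_const x
    simpa [hχ_zero] using ((hχ.continuous.tendsto 0).comp hcx).smul_const (u x)
  have hU_le (k : ℕ) : eLpNorm (U k) p' μ ≤
      K * (eLpNorm (fderiv ℝ u) p μ + ENNReal.ofReal (|c k| * M) * eLpNorm u p μ) :=
    (eLpNorm_le_eLpNorm_fderiv_of_eq_inner μ (hU k) (hU_supp k) hp hn hp').trans <| by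
      gcongr
      exact eLpNorm_fderiv_comp_smul_smul_le (hχ.differentiable one_ne_zero) hu hχ_le hM (c k)
        (by exact_mod_cast hp) μ
  have hbound_lim : Tendsto
      (fun k ↦ K * (eLpNorm (fderiv ℝ u) p μ + ENNReal.ofReal (|c k| * M) * eLpNorm u p μ))
      atTop (𝓝 (K * eLpNorm (fderiv ℝ u) p μ)) := by
    have hcM : Tendsto (fun k ↦ ENNReal.ofReal (|c k| * M)) atTop (𝓝 0) := by
      simpa using ENNReal.tendsto_ofReal (hc.abs.mul_const M)
    simpa using ENNReal.Tendsto.const_mul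
      (tendsto_const_nhds.add (ENNReal.Tendsto.mul_const hcM (.inr hup.eLpNorm_ne_top)))
      (.inr ENNReal.coe_ne_top)
  calc eLpNorm u p' μ
      ≤ liminf (fun k ↦ eLpNorm (U k) p' μ) atTop :=
        Lp.eLpNorm_lim_le_liminf_eLpNorm (fun k ↦ (hU k).continuous.aestronglyMeasurable) u
          (.of_forall hU_lim)
    _ ≤ _ := liminf_le_liminf (.of_forall hU_le)
    _ = _ := hbound_lim.liminf_eq

end Sobolev

section Interpolation

lemma lintegral_mul_sq_le_interpolation {α : Type*} [MeasurableSpace α] {μ : Measure α}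
    {f g : α → ℝ≥0∞} (hf : AEMeasurable f μ) (hg : AEMeasurable g μ) {n q : ℝ} (hn : 2 < n)
    (hq : n / 2 < q) :
    ∫⁻ x, f x * g x ^ (2 : ℝ) ∂μ ≤ (∫⁻ x, f x ^ q ∂μ) ^ (1 / q) *
      (∫⁻ x, g x ^ (2 : ℝ) ∂μ) ^ (1 - n / (2 * q)) *
        (∫⁻ x, g x ^ (2 * n / (n - 2)) ∂μ) ^ ((n - 2) / (2 * q)) := by
  have hq₀ : 0 < q := by linarith
  have hn₂ : 0 < n - 2 := by linarith
  have hθ : 0 ≤ 1 - n / (2 * q) := by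
    rw [sub_nonneg, div_le_one (by positivity)]; linarith
  have hholder := ENNReal.lintegral_prod_norm_pow_le (μ := μ) Finset.univ
    (f := ![fun x ↦ f x ^ q, fun x ↦ g x ^ (2 : ℝ), fun x ↦ g x ^ (2 * n / (n - 2))])
    (p := ![1 / q, 1 - n / (2 * q), (n - 2) / (2 * q)])
    (by intro i _; fin_cases i; exacts [hf.pow_const _, hg.pow_const _, hg.pow_const _])
    (by simp only [Fin.sum_univ_three, Matrix.cons_val]; field)
    (by intro i _; fin_cases i
        exacts [(one_div_pos.2 hq₀).le, hθ, (div_pos hn₂ (by positivity)).le])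
  simp only [Fin.prod_univ_three, Matrix.cons_val] at hholder
  refine le_of_eq_of_le (lintegral_congr fun x ↦ ?_) hholder
  have hexp : 2 * (1 - n / (2 * q)) + 2 * n / (n - 2) * ((n - 2) / (2 * q)) = 2 := by field
  rw [mul_assoc, ← ENNReal.rpow_mul, mul_one_div_cancel hq₀.ne', ENNReal.rpow_one,
    ← ENNReal.rpow_mul, ← ENNReal.rpow_mul,
    ← ENNReal.rpow_add_of_nonneg _ _ (by positivity) (by positivity), hexp]

lemma exists_mul_rpow_mul_rpow_le {θ K ε : ℝ} (hθ₀ : 0 < θ) (hθ₁ : θ < 1) (hK : 0 ≤ K)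
    (hε : 0 < ε) :
    ∃ C : ℝ, 0 < C ∧ ∀ a x y : ℝ, 0 ≤ a → 0 ≤ x → 0 ≤ y →
      a * x ^ (1 - θ) * (K * y) ^ θ ≤ ε * y + C * a ^ (1 / (1 - θ)) * x := by
  have hθ : 0 < 1 - θ := sub_pos.2 hθ₁
  set A := ((K / ε) ^ θ) ^ (1 / (1 - θ)) with hA
  have hA₀ : 0 ≤ A := by positivity
  refine ⟨A + 1, by positivity, fun a x y ha hx hy ↦ ?_⟩
  calc a * x ^ (1 - θ) * (K * y) ^ θ = (ε * y) ^ θ * (A * a ^ (1 / (1 - θ)) * x) ^ (1 - θ) := by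
        rw [mul_rpow (by positivity) hx, mul_rpow hA₀ (by positivity), hA, ← rpow_mul ha,
          ← rpow_mul (by positivity), one_div_mul_cancel hθ.ne', rpow_one, rpow_one,
          show K * y = ε * y * (K / ε) by field, mul_rpow (by positivity) (by positivity)]
        ring
    _ ≤ θ * (ε * y) + (1 - θ) * (A * a ^ (1 / (1 - θ)) * x) :=
        geom_mean_le_arith_mean2_weighted hθ₀.le hθ.le (by positivity) (by positivity) (by ring)
    _ ≤ 1 * (ε * y) + 1 * ((A + 1) * a ^ (1 / (1 - θ)) * x) := by
        gcongr <;> linarith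
    _ = _ := by ring

lemma integral_norm_rpow_eq_toReal_lintegral {α F : Type*} [MeasurableSpace α] {μ : Measure α}
    [NormedAddCommGroup F] {f : α → F} (hf : AEStronglyMeasurable f μ) {p : ℝ} (hp : 0 ≤ p) :
    ∫ x, ‖f x‖ ^ p ∂μ = (∫⁻ x, ‖f x‖ₑ ^ p ∂μ).toReal := by
  rw [integral_eq_lintegral_of_nonneg_ae (.of_forall fun x ↦ by positivity)
    (hf.norm.aemeasurable.pow_const p).aestronglyMeasurable]
  simp_rw [← ENNReal.ofReal_rpow_of_nonneg (norm_nonneg _) hp, ofReal_norm]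

variable {E F G : Type*} [NormedAddCommGroup E] [NormedSpace ℝ E] [FiniteDimensional ℝ E]
  [MeasurableSpace E] [BorelSpace E] (μ : Measure E) [μ.IsAddHaarMeasure]
  [NormedAddCommGroup F] [InnerProductSpace ℝ F] [NormedAddCommGroup G]

lemma exists_lintegral_rpow_le_lintegral_fderiv (hn : 2 < finrank ℝ E) :
    ∃ K : ℝ≥0, ∀ u : E → F, ContDiff ℝ 1 u → MemLp u 2 μ →
      (∫⁻ x, ‖u x‖ₑ ^ (2 * finrank ℝ E / (finrank ℝ E - 2) : ℝ) ∂μ) ^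
          ((finrank ℝ E - 2) / finrank ℝ E : ℝ) ≤
        K * ∫⁻ x, ‖fderiv ℝ u x‖ₑ ^ (2 : ℝ) ∂μ := by
  have hn' : (2 : ℝ) < finrank ℝ E := by exact_mod_cast hn
  set n := (finrank ℝ E : ℝ) with hn_def
  have hn₂ : 0 < n - 2 := by linarith
  let r : ℝ≥0 := ⟨2 * n / (n - 2), by positivity⟩
  have hr : (r : ℝ) = 2 * n / (n - 2) := rfl
  have hr₀ : r ≠ 0 := by rw [← NNReal.coe_ne_zero, hr]; positivity
  refine ⟨eLpNormLESNormFDerivOfEqInnerConst μ 2 ^ 2, fun u hu hu₂ ↦ ?_⟩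
  have hsobolev := eLpNorm_le_eLpNorm_fderiv_of_memLp μ (p := 2) (p' := r) hu hu₂ one_le_two
    (by lia) (by rw [hr, ← hn_def]; push_cast; field)
  rw [eLpNorm_nnreal_eq_lintegral hr₀, eLpNorm_nnreal_eq_lintegral two_ne_zero, hr] at hsobolev
  convert ENNReal.rpow_le_rpow hsobolev two_pos.le using 1
  · rw [← ENNReal.rpow_mul]; congr 1; field
  · rw [ENNReal.mul_rpow_of_nonneg _ _ two_pos.le, ← ENNReal.rpow_mul]; simp

lemma exists_lintegral_mul_sq_le (hn : 2 < finrank ℝ E) {q : ℝ} (hq : finrank ℝ E / 2 < q) :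
    ∃ K : ℝ≥0, ∀ (h : E → G) (u : E → F), AEStronglyMeasurable h μ → ContDiff ℝ 1 u →
      MemLp u 2 μ →
      ∫⁻ x, ‖h x‖ₑ * ‖u x‖ₑ ^ (2 : ℝ) ∂μ ≤ (∫⁻ x, ‖h x‖ₑ ^ q ∂μ) ^ (1 / q) *
        (∫⁻ x, ‖u x‖ₑ ^ (2 : ℝ) ∂μ) ^ (1 - finrank ℝ E / (2 * q)) *
          (K * ∫⁻ x, ‖fderiv ℝ u x‖ₑ ^ (2 : ℝ) ∂μ) ^ (finrank ℝ E / (2 * q)) := by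
  obtain ⟨K, hK⟩ := exists_lintegral_rpow_le_lintegral_fderiv (F := F) μ hn
  have hn' : (2 : ℝ) < finrank ℝ E := by exact_mod_cast hn
  have hq₀ : 0 < q := by linarith
  refine ⟨K, fun h u hh hu hu₂ ↦
    (lintegral_mul_sq_le_interpolation hh.enorm hu₂.1.enorm hn' hq).trans ?_⟩
  gcongr
  calc _ = ((∫⁻ x, ‖u x‖ₑ ^ (2 * finrank ℝ E / (finrank ℝ E - 2) : ℝ) ∂μ) ^
          ((finrank ℝ E - 2) / finrank ℝ E : ℝ)) ^ (finrank ℝ E / (2 * q)) := by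
        rw [← ENNReal.rpow_mul]; congr 1; field
    _ ≤ _ := ENNReal.rpow_le_rpow (hK u hu hu₂) (by positivity)

lemma exists_integral_mul_sq_le_interpolation (hn : 2 < finrank ℝ E) {q : ℝ}
    (hq : finrank ℝ E / 2 < q) :
    ∃ K : ℝ≥0, ∀ (h : E → G) (u : E → F), MemLp h (ENNReal.ofReal q) μ → ContDiff ℝ 1 u →
      MemLp u 2 μ → MemLp (fderiv ℝ u) 2 μ →
      ∫ x, ‖h x‖ * ‖u x‖ ^ 2 ∂μ ≤ (∫ x, ‖h x‖ ^ q ∂μ) ^ (1 / q) *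
        (∫ x, ‖u x‖ ^ 2 ∂μ) ^ (1 - finrank ℝ E / (2 * q)) *
          (K * ∫ x, ‖fderiv ℝ u x‖ ^ 2 ∂μ) ^ (finrank ℝ E / (2 * q)) := by
  obtain ⟨K, hK⟩ := exists_lintegral_mul_sq_le (F := F) (G := G) μ hn hq
  have hq₀ : 0 < q := by linarith [(finrank ℝ E).cast_nonneg (α := ℝ)]
  have hθ : 0 ≤ 1 - finrank ℝ E / (2 * q) := by
    rw [sub_nonneg, div_le_one (by positivity)]; linarith
  refine ⟨K, fun h u hh hu hu₂ hdu₂ ↦ ?_⟩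
  have hh_top : ∫⁻ x, ‖h x‖ₑ ^ q ∂μ < ∞ := by
    simpa [hq₀.le] using lintegral_rpow_enorm_lt_top_of_eLpNorm_lt_top (by simpa) (by simp) hh.2
  have hu_top : ∫⁻ x, ‖u x‖ₑ ^ (2 : ℝ) ∂μ < ∞ :=
    lintegral_rpow_enorm_lt_top_of_eLpNorm_lt_top two_ne_zero ENNReal.ofNat_ne_top hu₂.2
  have hdu_top : ∫⁻ x, ‖fderiv ℝ u x‖ₑ ^ (2 : ℝ) ∂μ < ∞ :=
    lintegral_rpow_enorm_lt_top_of_eLpNorm_lt_top two_ne_zero ENNReal.ofNat_ne_top hdu₂.2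
  have hlhs : ∫ x, ‖h x‖ * ‖u x‖ ^ 2 ∂μ = (∫⁻ x, ‖h x‖ₑ * ‖u x‖ₑ ^ (2 : ℝ) ∂μ).toReal := by
    rw [integral_eq_lintegral_of_nonneg_ae (.of_forall fun x ↦ by positivity)
      (by exact hh.1.norm.mul (hu₂.1.norm.pow 2))]
    simp [ENNReal.ofReal_mul, ENNReal.ofReal_pow]
  simp_rw [hlhs, ← rpow_two]
  rw [integral_norm_rpow_eq_toReal_lintegral hh.1 hq₀.le,
    integral_norm_rpow_eq_toReal_lintegral hu₂.1 two_pos.le,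
    integral_norm_rpow_eq_toReal_lintegral hdu₂.1 two_pos.le]
  refine (ENNReal.toReal_mono (by finiteness) (hK h u hh.1 hu hu₂)).trans_eq ?_
  simp only [ENNReal.toReal_mul, ← ENNReal.toReal_rpow, ENNReal.coe_toReal]

theorem exists_integral_mul_sq_le (hn : 2 < finrank ℝ E) {q ε : ℝ} (hq : finrank ℝ E / 2 < q)
    (hε : 0 < ε) :
    ∃ C : ℝ, 0 < C ∧ ∀ (h : E → G) (u : E → F), MemLp h (ENNReal.ofReal q) μ → ContDiff ℝ 1 u →
      MemLp u 2 μ → MemLp (fderiv ℝ u) 2 μ →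
      ∫ x, ‖h x‖ * ‖u x‖ ^ 2 ∂μ ≤ ε * (∫ x, ‖fderiv ℝ u x‖ ^ 2 ∂μ) +
        C * (∫ x, ‖h x‖ ^ q ∂μ) ^ (2 / (2 * q - finrank ℝ E)) * ∫ x, ‖u x‖ ^ 2 ∂μ := by
  have hn' : (2 : ℝ) < finrank ℝ E := by exact_mod_cast hn
  have hq₀ : 0 < q := by linarith
  have hqn : 0 < 2 * q - finrank ℝ E := by linarith
  have hθ₁ : finrank ℝ E / (2 * q) < 1 := by rw [div_lt_one (by positivity)]; linarith
  obtain ⟨K, hK⟩ := exists_integral_mul_sq_le_interpolation (F := F) (G := G) μ hn hq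
  obtain ⟨C, hC, hyoung⟩ := exists_mul_rpow_mul_rpow_le (θ := finrank ℝ E / (2 * q))
    (by positivity) hθ₁ K.coe_nonneg hε
  refine ⟨C, hC, fun h u hh hu hu₂ hdu₂ ↦ (hK h u hh hu hu₂ hdu₂).trans ?_⟩
  have hexp : 2 / (2 * q - finrank ℝ E) = 1 / q * (1 / (1 - finrank ℝ E / (2 * q))) := by field
  rw [hexp, rpow_mul (by positivity)]
  exact hyoung _ _ _ (by positivity) (by positivity) (by positivity)

end Interpolation

section RpowOfNonneg

variable {E F : Type*} [NormedAddCommGroup E] [NormedSpace ℝ E]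
  [NormedAddCommGroup F] [NormedSpace ℝ F]

lemma norm_sub_sub_fderiv_le_of_lipschitzWith {f : E → F} {L : ℝ≥0} (hf : Differentiable ℝ f)
    (hL : LipschitzWith L (fderiv ℝ f)) (x y : E) :
    ‖f y - f x - fderiv ℝ f x (y - x)‖ ≤ L * ‖y - x‖ ^ 2 := by
  have hbound : ∀ z ∈ Metric.closedBall x ‖y - x‖,
      ‖fderiv ℝ f z - fderiv ℝ f x‖ ≤ L * ‖y - x‖ := fun z hz ↦ by
    rw [mem_closedBall_iff_norm] at hz
    exact (hL.norm_sub_le z x).trans (by gcongr)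
  calc _ ≤ L * ‖y - x‖ * ‖y - x‖ :=
        (convex_closedBall x _).norm_image_sub_le_of_norm_fderiv_le' (fun z _ ↦ hf z) hbound
          (by simp) (by simp [dist_eq_norm])
    _ = _ := by ring

variable {f : E → ℝ} {L : ℝ≥0} {r : ℝ}

-- Nonnegativity of the quadratic Taylor upper bound forces its discriminant to be nonpositive.
lemma norm_fderiv_le_sqrt_of_nonneg (hf : Differentiable ℝ f) (hL : LipschitzWith L (fderiv ℝ f))
    (hf₀ : ∀ x, 0 ≤ f x) (x : E) : ‖fderiv ℝ f x‖ ≤ 2 * √L * √(f x) := by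
  refine ContinuousLinearMap.opNorm_le_bound _ (by positivity) fun e ↦ ?_
  have htaylor (t : ℝ) : 0 ≤ L * ‖e‖ ^ 2 * (t * t) + fderiv ℝ f x e * t + f x := by
    have h := (le_abs_self _).trans (norm_sub_sub_fderiv_le_of_lipschitzWith hf hL x (x + t • e))
    rw [add_sub_cancel_left, map_smul, norm_smul, mul_pow, Real.norm_eq_abs, sq_abs,
      smul_eq_mul] at h
    linarith [hf₀ (x + t • e)]
  have hdiscrim : fderiv ℝ f x e ^ 2 - 4 * (L * ‖e‖ ^ 2) * f x ≤ 0 := discrim_le_zero htaylor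
  refine abs_le_of_sq_le_sq ?_ (by positivity)
  rw [mul_pow, mul_pow, mul_pow, Real.sq_sqrt L.coe_nonneg, Real.sq_sqrt (hf₀ x)]
  linarith

lemma fderiv_eq_zero_of_nonneg_of_eq_zero (hf₀ : ∀ x, 0 ≤ f x) {x : E} (hx : f x = 0) :
    fderiv ℝ f x = 0 :=
  IsLocalMin.fderiv_eq_zero (.of_forall fun y ↦ hx ▸ hf₀ y)

lemma hasFDerivAt_rpow_of_eq_zero (hf : Differentiable ℝ f) (hL : LipschitzWith L (fderiv ℝ f))
    (hf₀ : ∀ x, 0 ≤ f x) (hr : 1 / 2 < r) {x : E} (hx : f x = 0) :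
    HasFDerivAt (fun y ↦ f y ^ r) (0 : E →L[ℝ] ℝ) x := by
  have hquad (y : E) : f y ≤ L * ‖y - x‖ ^ 2 := by
    have h := (le_abs_self _).trans (norm_sub_sub_fderiv_le_of_lipschitzWith hf hL x y)
    simpa [hx, fderiv_eq_zero_of_nonneg_of_eq_zero hf₀ hx] using h
  have hbigO : (fun y ↦ f y ^ r) =O[𝓝 x] fun y ↦ ‖y - x‖ ^ (2 * r) := by
    refine .of_bound (L ^ r) (.of_forall fun y ↦ ?_)
    rw [Real.norm_of_nonneg (rpow_nonneg (hf₀ y) r), Real.norm_of_nonneg (by positivity),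
      rpow_mul (norm_nonneg _), rpow_two, ← mul_rpow L.coe_nonneg (by positivity)]
    exact rpow_le_rpow (hf₀ y) (hquad y) (by linarith)
  have hlittleO : (fun y ↦ ‖y - x‖ ^ (2 * r)) =o[𝓝 x] fun y ↦ y - x := by
    have h := (hasDerivAt_abs_rpow 0 (p := 2 * r) (by linarith)).isLittleO
    have hzero : (0 : ℝ) ^ (2 * r) = 0 := zero_rpow (by linarith)
    simp only [abs_zero, hzero, sub_zero, mul_zero, smul_zero] at h
    have hnorm : Tendsto (fun y ↦ ‖y - x‖) (𝓝 x) (𝓝 0) := by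
      simpa using tendsto_norm_sub_self x
    simpa [Function.comp_def] using h.comp_tendsto hnorm
  refine .of_isLittleO ?_
  simpa [hx, zero_rpow (by linarith : r ≠ 0)] using hbigO.trans_isLittleO hlittleO

lemma hasFDerivAt_rpow_of_nonneg (hf : Differentiable ℝ f) (hL : LipschitzWith L (fderiv ℝ f))
    (hf₀ : ∀ x, 0 ≤ f x) (hr : 1 / 2 < r) (x : E) :
    HasFDerivAt (fun y ↦ f y ^ r) ((r * f x ^ (r - 1)) • fderiv ℝ f x) x := by
  rcases eq_or_ne (f x) 0 with hx | hx
  · rw [fderiv_eq_zero_of_nonneg_of_eq_zero hf₀ hx, smul_zero]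
    exact hasFDerivAt_rpow_of_eq_zero hf hL hf₀ hr hx
  · exact (hf x).hasFDerivAt.rpow_const (.inl hx)

lemma norm_fderiv_rpow_le (hf : Differentiable ℝ f) (hL : LipschitzWith L (fderiv ℝ f))
    (hf₀ : ∀ x, 0 ≤ f x) (hr : 1 / 2 < r) (x : E) :
    ‖fderiv ℝ (fun y ↦ f y ^ r) x‖ ≤ 2 * r * √L * f x ^ (r - 1 / 2) := by
  rw [(hasFDerivAt_rpow_of_nonneg hf hL hf₀ hr x).fderiv]
  rcases (hf₀ x).eq_or_lt' with hx | hx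
  · rw [fderiv_eq_zero_of_nonneg_of_eq_zero hf₀ hx, smul_zero, norm_zero, hx,
      zero_rpow (by linarith), mul_zero]
  · rw [norm_smul, Real.norm_of_nonneg (by positivity)]
    calc _ ≤ r * f x ^ (r - 1) * (2 * √L * √(f x)) := by
          gcongr; exact norm_fderiv_le_sqrt_of_nonneg hf hL hf₀ x
      _ = 2 * r * √L * (f x ^ (r - 1) * f x ^ (1 / 2 : ℝ)) := by rw [sqrt_eq_rpow (f x)]; ring
      _ = _ := by rw [← rpow_add hx]; ring_nf

lemma contDiff_rpow_of_nonneg (hf : Differentiable ℝ f) (hL : LipschitzWith L (fderiv ℝ f))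
    (hf₀ : ∀ x, 0 ≤ f x) (hr : 1 / 2 < r) : ContDiff ℝ 1 (fun y ↦ f y ^ r) := by
  have hderiv := hasFDerivAt_rpow_of_nonneg hf hL hf₀ hr
  refine contDiff_one_iff_fderiv.2 ⟨fun x ↦ (hderiv x).differentiableAt, ?_⟩
  refine continuous_iff_continuousAt.2 fun x ↦ ?_
  rcases eq_or_ne (f x) 0 with hx | hx
  · rw [ContinuousAt, (hasFDerivAt_rpow_of_eq_zero hf hL hf₀ hr hx).fderiv]
    refine squeeze_zero_norm (norm_fderiv_rpow_le hf hL hf₀ hr) ?_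
    have hcont : Continuous fun y ↦ 2 * r * √L * f y ^ (r - 1 / 2) :=
      continuous_const.mul (hf.continuous.rpow_const fun _ ↦ .inr (by linarith))
    simpa [hx, zero_rpow (by linarith : r - 1 / 2 ≠ 0), -one_div] using hcont.tendsto x
  · rw [funext fun y ↦ (hderiv y).fderiv]
    exact (continuousAt_const.mul (hf.continuous.continuousAt.rpow_const (.inl hx))).smul
      hL.continuous.continuousAt

end RpowOfNonneg

section SchwartzRpow

variable {E F : Type*} [NormedAddCommGroup E] [NormedSpace ℝ E]
  [NormedAddCommGroup F] [NormedSpace ℝ F]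

lemma exists_lipschitzWith_schwartzMap (f : 𝓢(E, F)) : ∃ L : ℝ≥0, LipschitzWith L f := by
  obtain ⟨C, hC₀, hC⟩ := f.decay 0 1
  lift C to ℝ≥0 using hC₀.le
  exact ⟨C, lipschitzWith_of_nnnorm_fderiv_le f.differentiable fun x ↦
    NNReal.coe_le_coe.1 (by simpa using hC x)⟩

lemma exists_lipschitzWith_fderiv_schwartzMap (f : 𝓢(E, F)) :
    ∃ L : ℝ≥0, LipschitzWith L (fderiv ℝ f) :=
  exists_lipschitzWith_schwartzMap (SchwartzMap.fderivCLM ℝ E F f)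

variable {g : 𝓢(E, ℝ)} {r : ℝ}

lemma contDiff_schwartzMap_rpow (hg : ∀ v, 0 ≤ g v) (hr : 1 / 2 < r) :
    ContDiff ℝ 1 fun v ↦ g v ^ r := by
  obtain ⟨L, hL⟩ := exists_lipschitzWith_fderiv_schwartzMap g
  exact contDiff_rpow_of_nonneg g.differentiable hL hg hr

variable [MeasurableSpace E] [BorelSpace E] (μ : Measure E) [μ.HasTemperateGrowth]

lemma memLp_schwartzMap_rpow (hg : ∀ v, 0 ≤ g v) (hr : 0 < r) (s : ℝ≥0∞) :
    MemLp (fun v ↦ g v ^ r) s μ := by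
  have h := (g.memLp (s * ENNReal.ofReal r) μ).norm_rpow_div (ENNReal.ofReal r)
  rw [ENNReal.mul_div_cancel_right (by simpa) ENNReal.ofReal_ne_top,
    ENNReal.toReal_ofReal hr.le] at h
  simpa only [Real.norm_of_nonneg (hg _)] using h

lemma memLp_fderiv_schwartzMap_rpow [SecondCountableTopology E] (hg : ∀ v, 0 ≤ g v)
    (hr : 1 / 2 < r) (s : ℝ≥0∞) :
    MemLp (fderiv ℝ fun v ↦ g v ^ r) s μ := by
  obtain ⟨L, hL⟩ := exists_lipschitzWith_fderiv_schwartzMap g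
  refine ((memLp_schwartzMap_rpow μ hg (sub_pos.2 hr) s).const_mul (2 * r * √L)).of_le
    ((contDiff_schwartzMap_rpow hg hr).continuous_fderiv one_ne_zero).aestronglyMeasurable
    (.of_forall fun v ↦ ?_)
  exact (norm_fderiv_rpow_le g.differentiable hL hg hr v).trans (le_abs_self _)

end SchwartzRpow

section BracketWeight

variable {E : Type*} [NormedAddCommGroup E] [InnerProductSpace ℝ E]

lemma hasTemperateGrowth_sqrt_one_add_norm_sq_rpow (a : ℝ) :
    Function.HasTemperateGrowth fun v : E ↦ √(1 + ‖v‖ ^ 2) ^ a := by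
  have h (v : E) : √(1 + ‖v‖ ^ 2) ^ a = (1 + ‖v‖ ^ 2) ^ (a / 2) := by
    rw [sqrt_eq_rpow, ← rpow_mul (by positivity), one_div_mul_eq_div]
  simpa only [h] using Function.hasTemperateGrowth_one_add_norm_sq_rpow E (a / 2)

/-- The Schwartz function `v ↦ ⟨v⟩ ^ a * g v`, where `⟨v⟩ = √(1 + ‖v‖ ^ 2)`. It reduces weighted
powers of `g` to powers of a Schwartz function. -/
def bracketMul (a : ℝ) (g : 𝓢(E, ℝ)) : 𝓢(E, ℝ) :=
  SchwartzMap.smulLeftCLM ℝ (fun v ↦ √(1 + ‖v‖ ^ 2) ^ a) g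

lemma bracketMul_apply (a : ℝ) (g : 𝓢(E, ℝ)) (v : E) :
    bracketMul a g v = √(1 + ‖v‖ ^ 2) ^ a * g v :=
  SchwartzMap.smulLeftCLM_apply_apply (hasTemperateGrowth_sqrt_one_add_norm_sq_rpow a) g v

lemma bracketMul_nonneg (a : ℝ) {g : 𝓢(E, ℝ)} (hg : ∀ v, 0 ≤ g v) (v : E) :
    0 ≤ bracketMul a g v := by
  rw [bracketMul_apply]
  exact mul_nonneg (by positivity) (hg v)

lemma bracketMul_rpow (a r : ℝ) {g : 𝓢(E, ℝ)} (hg : ∀ v, 0 ≤ g v) (v : E) :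
    bracketMul a g v ^ r = g v ^ r * √(1 + ‖v‖ ^ 2) ^ (a * r) := by
  rw [bracketMul_apply, mul_rpow (by positivity) (hg v), ← rpow_mul (by positivity), mul_comm]

end BracketWeight

section Poincare

variable {E : Type*} [NormedAddCommGroup E] [InnerProductSpace ℝ E] [FiniteDimensional ℝ E]
  [MeasurableSpace E] [BorelSpace E]

theorem eps_poincare_general (μ : Measure E) [μ.IsAddHaarMeasure] (hn : 2 < finrank ℝ E)
    {q ε : ℝ} (hq : finrank ℝ E / 2 < q) (hε : 0 < ε) :
    ∃ C : ℝ, 0 < C ∧ ∀ m p : ℝ, 1 < p → ∀ g : 𝓢(E, ℝ), (∀ v, 0 ≤ g v) →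
      ∫ v, g v ^ (p + 1) ∂μ ≤
        ε * (∫ v, ‖fderiv ℝ (fun w ↦ g w ^ (p / 2) * √(1 + ‖w‖ ^ 2) ^ (-m / 2)) v‖ ^ 2 ∂μ) +
          C * (∫ v, (√(1 + ‖v‖ ^ 2) ^ m * g v) ^ q ∂μ) ^ (2 / (2 * q - finrank ℝ E)) *
            ∫ v, g v ^ p * √(1 + ‖v‖ ^ 2) ^ (-m) ∂μ := by
  obtain ⟨C, hC, hpoincare⟩ := exists_integral_mul_sq_le (F := ℝ) (G := ℝ) μ hn hq hε
  refine ⟨C, hC, fun m p hp g hg ↦ ?_⟩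
  have hG := bracketMul_nonneg (-m / p) hg
  have hu (v : E) :
      bracketMul (-m / p) g v ^ (p / 2) = g v ^ (p / 2) * √(1 + ‖v‖ ^ 2) ^ (-m / 2) := by
    rw [bracketMul_rpow _ _ hg, show -m / p * (p / 2) = -m / 2 by field]
  have hu_sq (v : E) :
      ‖g v ^ (p / 2) * √(1 + ‖v‖ ^ 2) ^ (-m / 2)‖ ^ 2 = g v ^ p * √(1 + ‖v‖ ^ 2) ^ (-m) := by
    rw [Real.norm_eq_abs, sq_abs, mul_pow, ← rpow_mul_natCast (hg v),
      ← rpow_mul_natCast (by positivity)]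
    congr 2 <;> field
  have hh (v : E) : ‖bracketMul m g v‖ = √(1 + ‖v‖ ^ 2) ^ m * g v := by
    rw [Real.norm_of_nonneg (bracketMul_nonneg m hg v), bracketMul_apply]
  have hhu (v : E) :
      √(1 + ‖v‖ ^ 2) ^ m * g v * (g v ^ p * √(1 + ‖v‖ ^ 2) ^ (-m)) = g v ^ (p + 1) := by
    rw [rpow_add_one' (hg v) (by linarith), rpow_neg (by positivity)]
    field
  have hp₂ : 1 / 2 < p / 2 := by linarith
  have h := hpoincare (bracketMul m g) (fun v ↦ bracketMul (-m / p) g v ^ (p / 2))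
    ((bracketMul m g).memLp _ μ) (contDiff_schwartzMap_rpow hG hp₂)
    (memLp_schwartzMap_rpow μ hG (by linarith) 2) (memLp_fderiv_schwartzMap_rpow μ hG hp₂ 2)
  simpa only [hu, hu_sq, hh, hhu] using h

end Poincare

lemma sum_sq_apply_single {ι : Type*} [Fintype ι] [DecidableEq ι]
    (T : EuclideanSpace ℝ ι →L[ℝ] ℝ) :
    ∑ i, T (EuclideanSpace.single i 1) ^ 2 = ‖T‖ ^ 2 := by
  have h := (EuclideanSpace.basisFun ι ℝ).sum_sq_norm_inner_left
    ((InnerProductSpace.toDual ℝ _).symm T)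
  simpa using h

/-- the ε-Poincaré inequality. -/
theorem eps_poincare (p q : ℝ) (hp : 1 < p) (hq : 3 / 2 < q) :
    ∀ ε : ℝ, 0 < ε → ∃ C : ℝ, 0 < C ∧
      ∀ g : SchwartzMap V3 ℝ, (∀ v, 0 ≤ g v) →
        (∫ v : V3, g v ^ (p + 1)) ≤
          ε * (∫ v : V3, ∑ i : Fin 3,
              (pd i (fun w => g w ^ (p / 2) * jap w ^ (-(3 : ℝ) / 2)) v) ^ 2) +
            C * (∫ v : V3, (jap v ^ (3 : ℝ) * g v) ^ q) ^ (2 / (2 * q - 3)) *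
              (∫ v : V3, g v ^ p * jap v ^ (-(3 : ℝ))) := by
  intro ε hε
  obtain ⟨C, hC, h⟩ := eps_poincare_general (E := V3) volume (by simp) (by simpa using hq) hε
  exact ⟨C, hC, fun g hg ↦ by simpa [pd, jap, sum_sq_apply_single] using h 3 p hp g hg⟩

end
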